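/- arXiv:2412.13936 — 4 statements merged into one kernel-verified Lean document; each statement's English description precedes it below -/
import Mathlib

section
/- Let G be a group, φ : G → ℤ a group homomorphism, and a ∈ G an element with φ(a) ≠ 0 such that the cyclic subgroup ⟨a⟩ generated by a is normal in G. Then a lies in the center of G (and hence ⟨a⟩ is central). -/
theorem le_center_of_disjoint_commutator {G : Type*} [Group G] {N : Subgroup G} [N.Normal]
    (hN : Disjoint N (commutator G)) : N ≤ Subgroup.center G := by
  have h_bot : ⁅N, (⊤ : Subgroup G)⁆ = ⊥ := by
    rw [eq_bot_iff, ← hN.eq_bot]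
    exact le_inf (Subgroup.commutator_le_left N ⊤) (Subgroup.commutator_mono le_top le_rfl)
  rwa [Subgroup.commutator_eq_bot_iff_le_centralizer, Subgroup.coe_top,
    Subgroup.centralizer_univ] at h_bot

theorem disjoint_zpowers_ker_of_not_isOfFinOrder {G H : Type*} [Group G] [DivisionMonoid H]
    {φ : G →* H} {a : G} (ha : ¬IsOfFinOrder (φ a)) :
    Disjoint (Subgroup.zpowers a) φ.ker := by
  rw [Subgroup.disjoint_def]
  rintro _ ⟨n, rfl⟩ (h_ker : φ (a ^ n) = 1)
  have h_zero : n = 0 := by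
    by_contra hn
    exact ha (isOfFinOrder_iff_zpow_eq_one.mpr ⟨n, hn, map_zpow φ a n ▸ h_ker⟩)
  rw [h_zero]
  exact zpow_zero a

theorem mem_center_of_zpowers_normal_general {G A : Type*} [Group G] [CommGroup A]
    (φ : G →* A) (a : G) (hφ : ¬IsOfFinOrder (φ a)) [(Subgroup.zpowers a).Normal] :
    a ∈ Subgroup.center G := by
  have h_disjoint : Disjoint (Subgroup.zpowers a) (commutator G) :=
    (disjoint_zpowers_ker_of_not_isOfFinOrder hφ).mono_right
      (Abelianization.commutator_subset_ker φ)
  exact le_center_of_disjoint_commutator h_disjoint (Subgroup.mem_zpowers a)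

/-- If `φ : G → ℤ` is a group homomorphism and `a ∈ G` satisfies `φ a ≠ 0`
(written multiplicatively: `φ a ≠ 1` in `Multiplicative ℤ`), and the cyclic
subgroup `⟨a⟩` generated by `a` is normal in `G`, then `a` is central. -/
theorem mem_center_of_zpowers_normal {G : Type*} [Group G]
    (φ : G →* Multiplicative ℤ) (a : G) (hφ : φ a ≠ 1)
    (hnorm : (Subgroup.zpowers a).Normal) :
    a ∈ Subgroup.center G :=
  mem_center_of_zpowers_normal_general φ a (not_isOfFinOrder_of_isMulTorsionFree hφ)
end

section
/- Every cyclic normal subgroup of the Artin group A_{E₈} is central. -/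
/-- The defining relations of the (small-type) Artin group of a simple graph `G`:
braid relations `aᵢaⱼaᵢ = aⱼaᵢaⱼ` for adjacent vertices, and commutation relations
`aᵢaⱼ = aⱼaᵢ` for distinct non-adjacent vertices. -/
def artinRels {V : Type*} (G : SimpleGraph V) : Set (FreeGroup V) :=
  {r | ∃ i j : V,
    (G.Adj i j ∧
      r = FreeGroup.of i * FreeGroup.of j * FreeGroup.of i *
        (FreeGroup.of j * FreeGroup.of i * FreeGroup.of j)⁻¹) ∨
    (i ≠ j ∧ ¬ G.Adj i j ∧
      r = FreeGroup.of i * FreeGroup.of j * (FreeGroup.of j * FreeGroup.of i)⁻¹)}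

/-- The (small-type) Artin group of a simple graph. -/
abbrev ArtinGroup {V : Type*} (G : SimpleGraph V) : Type _ := PresentedGroup (artinRels G)

/-- The `E₈` Dynkin diagram, as a simple graph on vertices `v₁, …, v₈`
(encoded as `Fin 8`, with vertex `vₖ` corresponding to `k - 1 : Fin 8`), with
edges `{v₁,v₃}, {v₃,v₄}, {v₄,v₅}, {v₅,v₆}, {v₆,v₇}, {v₇,v₈}, {v₂,v₄}`. -/
def E8Graph : SimpleGraph (Fin 8) :=
  SimpleGraph.fromRel (fun i j =>
    ((i : ℕ) + 1, (j : ℕ) + 1) ∈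
      ({(1, 3), (3, 4), (4, 5), (5, 6), (6, 7), (7, 8), (2, 4)} : Set (ℕ × ℕ)))

/-!
Conjugation by a generator `aᵢ` is an automorphism of the cyclic normal subgroup, and a cyclic group
has only finitely many automorphisms, so some power `aᵢⁿ` with `n ≠ 0` commutes with every element
`x` of the subgroup. It remains to show that `aᵢ` itself commutes with `x`.

In the positive monoid this is a consequence of Garside's lemma: if `aₛ` and `aᵣ` are distinct and
`aᵣ` divides `aₛⁿ w` with `n ≥ 1`, then the complement of `aₛ` in the least common multiple of `aₛ`
and `aᵣ` divides `w`. That complement conjugates `aₛ` to a generator, so an induction on the length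
of `w` takes roots in `w aₜⁿ = aₛⁿ w`. To pass from the group to the monoid one uses a central
positive element divisible by all generators: some power of it clears the denominators of `x`, and
it makes the monoid embed in the group. For `E₈` such an element is Garside's `Δ = c ^ 15`, where
`c` is the product of the generators.
-/

universe u

section CentralFractions

theorem commute_of_mul_mem_center {M : Type*} [Monoid M] [IsLeftCancelMul M] {a b : M}
    (h : a * b ∈ Submonoid.center M) : Commute a b := by
  apply mul_left_cancel (a := a)
  rw [Submonoid.mem_center_iff.1 h a, mul_assoc]

/-- The center is a left Ore set: a fraction with central denominator is its own Ore fraction. -/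
abbrev oreSetCenter (M : Type*) [Monoid M] : OreLocalization.OreSet (Submonoid.center M) where
  ore_right_cancel a b s h := ⟨s, by
    rw [← Submonoid.mem_center_iff.1 s.2, ← Submonoid.mem_center_iff.1 s.2, h]⟩
  oreNum a _ := a
  oreDenom _ s := s
  ore_eq a s := (Submonoid.mem_center_iff.1 s.2 a).symm

theorem exists_injective_hom_isUnit_of_mem_center {M : Type u} [Monoid M] [IsLeftCancelMul M] :
    ∃ (N : Type u) (_ : Monoid N) (f : M →* N),
      Function.Injective f ∧ ∀ z ∈ Submonoid.center M, IsUnit (f z) := by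
  let _ := oreSetCenter M
  refine ⟨_, _, OreLocalization.numeratorHom (S := Submonoid.center M), fun a b h ↦ ?_,
    fun z hz ↦ OreLocalization.numerator_isUnit (⟨z, hz⟩ : Submonoid.center M)⟩
  obtain ⟨s, t, hst, hs⟩ := OreLocalization.oreDiv_eq_iff.1 h
  simp only [Submonoid.coe_one, mul_one] at hs
  rw [Submonoid.smul_def, hs, smul_eq_mul, smul_eq_mul] at hst
  exact (mul_left_cancel hst).symm

end CentralFractions

section CyclicNormal

variable {K : Type*} [Group K]

theorem finite_mulAut_of_isCyclic [IsCyclic K] : Finite (MulAut K) :=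
  Finite.of_equiv _ (IsCyclic.mulAutMulEquiv K).symm.toEquiv

theorem exists_pow_commute_of_isCyclic {H : Subgroup K} [H.Normal] [IsCyclic H] (g : K) :
    ∃ n ≠ 0, ∀ a ∈ H, Commute (g ^ n) a := by
  have : Finite (MulAut H) := finite_mulAut_of_isCyclic
  obtain ⟨n, hn, hconj⟩ :=
    (isOfFinOrder_of_finite (MulAut.conjNormal g : MulAut H)).exists_pow_eq_one
  refine ⟨n, hn.ne', fun a ha ↦ ?_⟩
  have hfix : g ^ n * a * (g ^ n)⁻¹ = a := by
    rw [← MulAut.conjNormal_apply (g ^ n) (⟨a, ha⟩ : H), map_pow, hconj, MulAut.one_apply]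
  exact mul_inv_eq_iff_eq_mul.1 hfix

end CyclicNormal

namespace ArtinMonoid

/-- The defining relations of the Artin monoid of a graph: the relations of the Artin group, read
between positive words. -/
inductive Rel {V : Type*} (G : SimpleGraph V) : FreeMonoid V → FreeMonoid V → Prop
  | braid {i j : V} (h : G.Adj i j) :
      Rel G (.of i * .of j * .of i) (.of j * .of i * .of j)
  | comm {i j : V} (hne : i ≠ j) (h : ¬ G.Adj i j) : Rel G (.of i * .of j) (.of j * .of i)

end ArtinMonoid

/-- The (small-type) Artin monoid of a simple graph, presented by the positive relations of the
Artin group. -/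
abbrev ArtinMonoid {V : Type*} (G : SimpleGraph V) : Type _ :=
  PresentedMonoid (ArtinMonoid.Rel G)

namespace ArtinMonoid

open PresentedMonoid (mk surjective_mk mk_eq_mk_iff mk_eq_mk_of_rel)

variable {V : Type*} {G : SimpleGraph V}

/-- The standard generators of the Artin monoid. -/
def of (i : V) : ArtinMonoid G := PresentedMonoid.of (Rel G) i

theorem mk_of_mul (i : V) (w : FreeMonoid V) :
    mk (Rel G) (.of i * w) = of i * mk (Rel G) w := rfl

theorem eq_one_or_exists_of_mul (x : ArtinMonoid G) : x = 1 ∨ ∃ i y, x = of i * y := by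
  obtain ⟨w, rfl⟩ := surjective_mk x
  cases w using FreeMonoid.casesOn with
  | one => exact .inl rfl
  | of_mul i w => exact .inr ⟨i, mk _ w, rfl⟩

@[elab_as_elim]
theorem induction_of_mul {p : ArtinMonoid G → Prop} (one : p 1)
    (of_mul : ∀ i x, p x → p (of i * x)) (x : ArtinMonoid G) : p x := by
  obtain ⟨w, rfl⟩ := surjective_mk x
  induction w using FreeMonoid.inductionOn' with
  | one => exact one
  | of_mul i w ih => exact of_mul i _ ih

theorem braid {i j : V} (h : G.Adj i j) :
    (of i * of j * of i : ArtinMonoid G) = of j * of i * of j :=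
  mk_eq_mk_of_rel (.braid h)

theorem braid_assoc {i j : V} (h : G.Adj i j) (x : ArtinMonoid G) :
    of i * (of j * (of i * x)) = of j * (of i * (of j * x)) := by
  simp only [← mul_assoc, braid h]

theorem commute_of {i j : V} (hne : i ≠ j) (h : ¬ G.Adj i j) :
    Commute (of i : ArtinMonoid G) (of j) :=
  mk_eq_mk_of_rel (.comm hne h)

/-- The homomorphism from the Artin monoid determined by elements satisfying the braid and
commutation relations. -/
def lift {M : Type*} [Monoid M] (f : V → M)
    (hbraid : ∀ i j, G.Adj i j → f i * f j * f i = f j * f i * f j)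
    (hcomm : ∀ i j, i ≠ j → ¬ G.Adj i j → f i * f j = f j * f i) : ArtinMonoid G →* M :=
  PresentedMonoid.lift f <| by
    rintro _ _ (⟨h⟩ | ⟨hne, h⟩)
    · exact hbraid _ _ h
    · exact hcomm _ _ hne h

/-- The word length of an element; it is well defined because the relations are homogeneous. -/
def length (x : ArtinMonoid G) : ℕ :=
  (lift (fun _ ↦ Multiplicative.ofAdd 1) (fun _ _ _ ↦ rfl) (fun _ _ _ _ ↦ rfl) x).toAdd

@[simp]
theorem length_one : length (1 : ArtinMonoid G) = 0 := rfl

@[simp]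
theorem length_of (i : V) : length (of i : ArtinMonoid G) = 1 := rfl

@[simp]
theorem length_mul (x y : ArtinMonoid G) : length (x * y) = length x + length y := by
  simp only [length, map_mul, toAdd_mul]

@[simp]
theorem length_mk (w : FreeMonoid V) : length (mk (Rel G) w) = w.length := by
  induction w using FreeMonoid.inductionOn' with
  | one => rfl
  | of_mul i w ih => rw [mk_of_mul, length_mul, length_of, ih, FreeMonoid.length_mul,
      FreeMonoid.length_of]

theorem not_of_dvd_one (i : V) : ¬ of i ∣ (1 : ArtinMonoid G) := by
  rintro ⟨x, hx⟩
  have hlen := congrArg length hx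
  rw [length_one, length_mul, length_of] at hlen
  omega

open Classical in
/-- The right complement of two generators: `of s * rightCompl s r = of r * rightCompl r s` is the
least common right multiple of `of s` and `of r`. -/
noncomputable def rightCompl (s r : V) : ArtinMonoid G :=
  if s = r then 1 else if G.Adj s r then of r * of s else of r

@[simp]
theorem rightCompl_self (s : V) : (rightCompl s s : ArtinMonoid G) = 1 := if_pos rfl

theorem rightCompl_of_adj {s r : V} (h : G.Adj s r) :
    (rightCompl s r : ArtinMonoid G) = of r * of s := by
  rw [rightCompl, if_neg h.ne, if_pos h]

theorem rightCompl_of_not_adj {s r : V} (hne : s ≠ r) (h : ¬ G.Adj s r) :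
    (rightCompl s r : ArtinMonoid G) = of r := by
  rw [rightCompl, if_neg hne, if_neg h]

theorem of_dvd_rightCompl {s r : V} (hne : s ≠ r) : of r ∣ (rightCompl s r : ArtinMonoid G) := by
  by_cases h : G.Adj s r
  · exact ⟨of s, rightCompl_of_adj h⟩
  · rw [rightCompl_of_not_adj hne h]

theorem exists_semiconjBy_rightCompl (s r : V) :
    ∃ t, SemiconjBy (rightCompl s r : ArtinMonoid G) (of t) (of s) := by
  rcases eq_or_ne s r with rfl | hne
  · exact ⟨s, by simp⟩
  by_cases h : G.Adj s r
  · exact ⟨r, by rw [rightCompl_of_adj h, SemiconjBy, ← braid h, mul_assoc]⟩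
  · exact ⟨s, by rw [rightCompl_of_not_adj hne h]; exact commute_of hne.symm (h ·.symm)⟩

theorem commute_rightCompl {t s r : V} (hs : Commute (of t : ArtinMonoid G) (of s))
    (hr : Commute (of t : ArtinMonoid G) (of r)) :
    Commute (of t : ArtinMonoid G) (rightCompl s r) := by
  unfold rightCompl
  split_ifs
  exacts [.one_right _, hr.mul_right hs, hr]

/-- The equation `of s * a = of r * b` holds because both sides are multiples of the least common
multiple of `of s` and `of r`. -/
def FactorsThroughLcm (s : V) (a : ArtinMonoid G) (r : V) (b : ArtinMonoid G) : Prop :=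
  ∃ v, a = rightCompl s r * v ∧ b = rightCompl r s * v

namespace FactorsThroughLcm

variable {s r t : V} {a b : ArtinMonoid G}

theorem symm (h : FactorsThroughLcm s a r b) : FactorsThroughLcm r b s a :=
  let ⟨v, ha, hb⟩ := h
  ⟨v, hb, ha⟩

theorem mul_right (h : FactorsThroughLcm s a r b) (c : ArtinMonoid G) :
    FactorsThroughLcm s (a * c) r (b * c) :=
  let ⟨v, ha, hb⟩ := h
  ⟨v * c, by rw [ha, mul_assoc], by rw [hb, mul_assoc]⟩

theorem self_iff : FactorsThroughLcm s a s b ↔ a = b := by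
  simp only [FactorsThroughLcm, rightCompl_self, one_mul, exists_eq_left', eq_comm]

theorem iff_of_adj (h : G.Adj s r) :
    FactorsThroughLcm s a r b ↔ ∃ v, a = of r * (of s * v) ∧ b = of s * (of r * v) := by
  simp only [FactorsThroughLcm, rightCompl_of_adj h, rightCompl_of_adj h.symm, mul_assoc]

theorem iff_of_not_adj (hne : s ≠ r) (h : ¬ G.Adj s r) :
    FactorsThroughLcm s a r b ↔ ∃ v, a = of r * v ∧ b = of s * v := by
  simp only [FactorsThroughLcm, rightCompl_of_not_adj hne h,
    rightCompl_of_not_adj hne.symm (h ·.symm)]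

end FactorsThroughLcm

section CubeCondition

/-- Garside's lemma for cofactors of length less than `n`; this is the hypothesis under which its
induction step is carried out. -/
def GarsideBelow (G : SimpleGraph V) (n : ℕ) : Prop :=
  ∀ ⦃s r : V⦄ ⦃a b : ArtinMonoid G⦄, length a < n →
    of s * a = of r * b → FactorsThroughLcm s a r b

variable {n : ℕ} {s t r : V} {a b v w : ArtinMonoid G}

namespace GarsideBelow

theorem eq (ih : GarsideBelow G n) (hn : length a < n) (h : of s * a = of s * b) : a = b :=
  FactorsThroughLcm.self_iff.1 (ih hn h)

theorem exists_of_adj (ih : GarsideBelow G n) (hsr : G.Adj s r) (hn : length a < n)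
    (h : of s * a = of r * b) : ∃ v, a = of r * (of s * v) ∧ b = of s * (of r * v) :=
  (FactorsThroughLcm.iff_of_adj hsr).1 (ih hn h)

theorem exists_of_not_adj (ih : GarsideBelow G n) (hne : s ≠ r) (hsr : ¬ G.Adj s r)
    (hn : length a < n) (h : of s * a = of r * b) : ∃ v, a = of r * v ∧ b = of s * v :=
  (FactorsThroughLcm.iff_of_not_adj hne hsr).1 (ih hn h)

-- Infinite descent: such an equation yields a shorter one with the three generators rotated.
theorem ne_of_triangle (ih : GarsideBelow G n) (hst : G.Adj s t) (htr : G.Adj t r)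
    (hsr : G.Adj s r) (hn : length a < n) : of s * a ≠ of t * (of r * b) := by
  induction hl : length a using Nat.strong_induction_on generalizing s t r a b with
  | _ l descent =>
    intro h
    obtain ⟨q, rfl, hb⟩ := ih.exists_of_adj hst hn h
    have hlen := congrArg length hb
    simp only [length_mul, length_of] at hn hl hlen
    exact descent (length b) (by omega) hsr.symm hst htr.symm (by omega) rfl hb

theorem factors_of_not_adj_of_not_adj (ih : GarsideBelow G n) (hst : s ≠ t) (hst' : ¬ G.Adj s t)
    (htr : t ≠ r) (htr' : ¬ G.Adj t r) (hn : length v < n) (h : of s * v = of r * w) :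
    FactorsThroughLcm s (of t * v) r (of t * w) := by
  have hcomm := commute_rightCompl (commute_of hst.symm (hst' ·.symm)) (commute_of htr htr')
  have hcomm' := commute_rightCompl (commute_of htr htr') (commute_of hst.symm (hst' ·.symm))
  obtain ⟨q, rfl, rfl⟩ := ih hn h
  exact ⟨of t * q, hcomm.left_comm q, hcomm'.left_comm q⟩

theorem factors_of_not_adj_of_adj (ih : GarsideBelow G n) (hst : s ≠ t) (hst' : ¬ G.Adj s t)
    (htr : G.Adj t r) (hn : length v < n) (h : of s * v = of r * (of t * w)) :
    FactorsThroughLcm s (of t * v) r (of t * (of r * w)) := by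
  have hsr : s ≠ r := by rintro rfl; exact hst' htr.symm
  have comm_st (x : ArtinMonoid G) : of s * (of t * x) = of t * (of s * x) :=
    (commute_of hst hst').left_comm x
  have hlen := congrArg length h
  by_cases hsr' : G.Adj s r
  · obtain ⟨q, rfl, hw⟩ := ih.exists_of_adj hsr' hn h
    simp only [length_mul, length_of] at hn hlen
    obtain ⟨q', rfl, hq⟩ := ih.exists_of_not_adj hst.symm (hst' ·.symm) (by omega) hw
    simp only [length_mul, length_of] at hlen
    obtain ⟨p, rfl, rfl⟩ := ih.exists_of_adj htr.symm (by omega) hq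
    refine (FactorsThroughLcm.iff_of_adj hsr').2 ⟨of t * (of r * (of s * p)), ?_, ?_⟩
    · rw [comm_st, braid_assoc htr, ← braid_assoc hsr', ← comm_st]
    · rw [← braid_assoc hsr', ← comm_st, comm_st p, braid_assoc htr]
  · obtain ⟨q, rfl, hw⟩ := ih.exists_of_not_adj hsr hsr' hn h
    simp only [length_mul, length_of] at hn hlen
    obtain ⟨p, rfl, rfl⟩ := ih.exists_of_not_adj hst.symm (hst' ·.symm) (by omega) hw
    have comm_sr (x : ArtinMonoid G) : of s * (of r * x) = of r * (of s * x) :=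
      (commute_of hsr hsr').left_comm x
    refine (FactorsThroughLcm.iff_of_not_adj hsr hsr').2 ⟨of t * (of r * p), ?_, ?_⟩
    · rw [braid_assoc htr]
    · rw [← comm_sr, ← comm_st]

theorem factors_of_adj_of_adj (ih : GarsideBelow G n) (hst : G.Adj s t) (htr : G.Adj t r)
    (hn : length v + 1 < n) (h : of s * (of t * v) = of r * (of t * w)) :
    FactorsThroughLcm s (of t * (of s * v)) r (of t * (of r * w)) := by
  have hn' : length (of t * v) < n := by rw [length_mul, length_of]; omega
  rcases eq_or_ne s r with rfl | hsr
  · rw [FactorsThroughLcm.self_iff, ih.eq (by omega) (ih.eq hn' h)]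
  have hsr' : ¬ G.Adj s r := fun hsr' ↦ ih.ne_of_triangle hsr' htr.symm hst hn' h
  have comm_sr (x : ArtinMonoid G) : of s * (of r * x) = of r * (of s * x) :=
    (commute_of hsr hsr').left_comm x
  have hlen := congrArg length h
  obtain ⟨x, hv, hw⟩ := ih.exists_of_not_adj hsr hsr' hn' h
  obtain ⟨y, rfl, rfl⟩ := ih.exists_of_adj htr (by omega) hv
  simp only [length_mul, length_of] at hn hlen
  obtain ⟨z, rfl, hyz⟩ := ih.exists_of_adj hst.symm (by omega) hw
  have hyz : of r * y = of s * z := ih.eq (by simp only [length_mul, length_of]; omega) hyz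
  obtain ⟨q, rfl, rfl⟩ := ih.exists_of_not_adj hsr.symm (hsr' ·.symm) (by omega) hyz
  refine (FactorsThroughLcm.iff_of_not_adj hsr hsr').2
    ⟨of t * (of r * (of s * (of t * q))), ?_, ?_⟩
  · rw [comm_sr, braid_assoc hst, braid_assoc htr]
  · rw [← comm_sr, ← braid_assoc htr, ← braid_assoc hst, comm_sr]

theorem trans (ih : GarsideBelow G n) (hn : length w ≤ n) (h₁ : FactorsThroughLcm s a t w)
    (h₂ : FactorsThroughLcm t w r b) : FactorsThroughLcm s a r b := by
  rcases eq_or_ne s t with rfl | hst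
  · rwa [FactorsThroughLcm.self_iff.1 h₁]
  rcases eq_or_ne t r with rfl | htr
  · rwa [← FactorsThroughLcm.self_iff.1 h₂]
  by_cases hst' : G.Adj s t <;> by_cases htr' : G.Adj t r
  · obtain ⟨v, rfl, hw⟩ := (FactorsThroughLcm.iff_of_adj hst').1 h₁
    obtain ⟨v', rfl, rfl⟩ := (FactorsThroughLcm.iff_of_adj htr').1 h₂
    have hlen := congrArg length hw
    simp only [length_mul, length_of] at hn hlen
    exact ih.factors_of_adj_of_adj hst' htr' (by omega) hw.symm
  · obtain ⟨v, rfl, hw⟩ := (FactorsThroughLcm.iff_of_adj hst').1 h₁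
    obtain ⟨v', rfl, rfl⟩ := (FactorsThroughLcm.iff_of_not_adj htr htr').1 h₂
    simp only [length_mul, length_of] at hn
    exact (ih.factors_of_not_adj_of_adj htr.symm (htr' ·.symm) hst'.symm (by omega) hw).symm
  · obtain ⟨v, rfl, rfl⟩ := (FactorsThroughLcm.iff_of_not_adj hst hst').1 h₁
    obtain ⟨v', hv, rfl⟩ := (FactorsThroughLcm.iff_of_adj htr').1 h₂
    simp only [length_mul, length_of] at hn
    exact ih.factors_of_not_adj_of_adj hst hst' htr' (by omega) hv
  · obtain ⟨v, rfl, rfl⟩ := (FactorsThroughLcm.iff_of_not_adj hst hst').1 h₁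
    obtain ⟨v', hv, rfl⟩ := (FactorsThroughLcm.iff_of_not_adj htr htr').1 h₂
    simp only [length_mul, length_of] at hn
    exact ih.factors_of_not_adj_of_not_adj hst hst' htr htr' (by omega) hv

end GarsideBelow

end CubeCondition

section Words

variable {n : ℕ} {x y z w : FreeMonoid V}

/-- Garside's lemma read on positive words: after their first letters are removed, the words `x` and
`y` are related as in the lemma. Tails are bounded in length so that this can be proved, along a
derivation of `x = y` from the relations, by induction on the bound `n`. -/
def HeadsFactor (G : SimpleGraph V) (n : ℕ) (x y : FreeMonoid V) : Prop :=
  ∀ ⦃s r : V⦄ ⦃u v : FreeMonoid V⦄, u.length ≤ n → x = .of s * u → y = .of r * v →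
    FactorsThroughLcm s (mk (Rel G) u) r (mk (Rel G) v)

theorem freeMonoid_of_mul_inj {s r : V} {u v : FreeMonoid V} (h : FreeMonoid.of s * u = .of r * v) :
    s = r ∧ u = v :=
  List.cons.inj h

theorem length_eq_of_conGen (h : conGen (Rel G) x y) : x.length = y.length := by
  rw [← length_mk (G := G), ← length_mk (G := G), mk_eq_mk_iff.2 h]

namespace HeadsFactor

theorem of_rel (h : Rel G x y) : HeadsFactor G n x y := by
  intro s r u v _ hx hy
  cases h with
  | braid h =>
    obtain ⟨rfl, rfl⟩ := freeMonoid_of_mul_inj hx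
    obtain ⟨rfl, rfl⟩ := freeMonoid_of_mul_inj hy
    exact (FactorsThroughLcm.iff_of_adj h).2 ⟨1, rfl, rfl⟩
  | comm hne h =>
    obtain ⟨rfl, rfl⟩ := freeMonoid_of_mul_inj hx
    obtain ⟨rfl, rfl⟩ := freeMonoid_of_mul_inj hy
    exact (FactorsThroughLcm.iff_of_not_adj hne h).2 ⟨1, rfl, rfl⟩

theorem refl (x : FreeMonoid V) : HeadsFactor G n x x := by
  intro s r u v _ hx hy
  obtain ⟨rfl, rfl⟩ := freeMonoid_of_mul_inj (hx.symm.trans hy)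
  exact FactorsThroughLcm.self_iff.2 rfl

theorem symm (hlen : x.length = y.length) (h : HeadsFactor G n x y) : HeadsFactor G n y x := by
  rintro s r u v hu rfl rfl
  simp only [FreeMonoid.length_mul, FreeMonoid.length_of, add_right_inj] at hlen
  exact (h (hlen.le.trans hu) rfl rfl).symm

theorem trans (ih : GarsideBelow G n) (hlen : x.length = y.length)
    (h₁ : HeadsFactor G n x y) (h₂ : HeadsFactor G n y z) : HeadsFactor G n x z := by
  rintro s r u v hu rfl rfl
  cases y using FreeMonoid.casesOn with
  | one => simp at hlen
  | of_mul t w =>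
    simp only [FreeMonoid.length_mul, FreeMonoid.length_of, add_right_inj] at hlen
    exact ih.trans (by rw [length_mk]; omega) (h₁ hu rfl rfl) (h₂ (by omega) rfl rfl)

theorem mul (hlen : x.length = y.length) (hzw : conGen (Rel G) z w)
    (h₁ : HeadsFactor G n x y) (h₂ : HeadsFactor G n z w) :
    HeadsFactor G n (x * z) (y * w) := by
  cases x using FreeMonoid.casesOn with
  | one =>
    obtain rfl : y = 1 := FreeMonoid.length_eq_zero.1 hlen.symm
    simpa only [one_mul] using h₂
  | of_mul i x =>
    cases y using FreeMonoid.casesOn with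
    | one => simp at hlen
    | of_mul j y =>
      intro s r u v hu hx hy
      rw [mul_assoc] at hx hy
      obtain ⟨rfl, rfl⟩ := freeMonoid_of_mul_inj hx
      obtain ⟨rfl, rfl⟩ := freeMonoid_of_mul_inj hy
      rw [FreeMonoid.length_mul] at hu
      rw [map_mul, map_mul, mk_eq_mk_iff.2 hzw]
      exact (h₁ (by omega) rfl rfl).mul_right _

theorem of_conGen (ih : GarsideBelow G n) (h : ConGen.Rel (Rel G) x y) : HeadsFactor G n x y := by
  induction h with
  | of _ _ h => exact of_rel h
  | refl x => exact refl x
  | symm h hxy => exact hxy.symm (length_eq_of_conGen h)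
  | trans h₁ _ hxy hyz => exact hxy.trans ih (length_eq_of_conGen h₁) hyz
  | mul h₁ h₂ hwx hyz => exact hwx.mul (length_eq_of_conGen h₁) h₂ hyz

end HeadsFactor

theorem garsideBelow (G : SimpleGraph V) (n : ℕ) : GarsideBelow G n := by
  induction n with
  | zero => exact fun _ _ _ _ hn ↦ absurd hn (Nat.not_lt_zero _)
  | succ n ih =>
    intro s r a b hn h
    obtain ⟨u, rfl⟩ := surjective_mk a
    obtain ⟨v, rfl⟩ := surjective_mk b
    rw [← mk_of_mul, ← mk_of_mul, mk_eq_mk_iff] at h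
    rw [length_mk] at hn
    exact HeadsFactor.of_conGen ih h (Nat.le_of_lt_succ hn) rfl rfl

end Words

theorem factorsThroughLcm_of_mul_eq_mul {s r : V} {a b : ArtinMonoid G}
    (h : of s * a = of r * b) : FactorsThroughLcm s a r b :=
  garsideBelow G (length a + 1) (Nat.lt_succ_self _) h

instance : IsLeftCancelMul (ArtinMonoid G) where
  mul_left_cancel x a b h := by
    induction x using induction_of_mul with
    | one => simpa only [one_mul] using h
    | of_mul s x ih =>
      simp only [mul_assoc] at h
      exact ih (FactorsThroughLcm.self_iff.1 (factorsThroughLcm_of_mul_eq_mul h))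

section Roots

theorem rightCompl_dvd_of_of_dvd_pow_mul {s r : V} (hne : s ≠ r) {k : ℕ} {w : ArtinMonoid G}
    (h : of r ∣ of s ^ (k + 1) * w) : rightCompl s r ∣ w := by
  induction k with
  | zero =>
    obtain ⟨z, hz⟩ := h
    rw [zero_add, pow_one] at hz
    obtain ⟨v, hw, -⟩ := factorsThroughLcm_of_mul_eq_mul hz
    exact ⟨v, hw⟩
  | succ k ih =>
    obtain ⟨z, hz⟩ := h
    rw [pow_succ', mul_assoc] at hz
    obtain ⟨v, hw, -⟩ := factorsThroughLcm_of_mul_eq_mul hz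
    exact ih (hw ▸ (of_dvd_rightCompl hne).mul_right v)

theorem eq_of_pow_succ_eq_pow_succ {s t : V} {k : ℕ}
    (h : (of s ^ (k + 1) : ArtinMonoid G) = of t ^ (k + 1)) : s = t := by
  by_contra hne
  have hdvd : (of t : ArtinMonoid G) ∣ of s ^ (k + 1) * 1 := by
    rw [mul_one, h, pow_succ']
    exact dvd_mul_right _ _
  exact not_of_dvd_one t ((of_dvd_rightCompl hne).trans (rightCompl_dvd_of_of_dvd_pow_mul hne hdvd))

theorem exists_semiconjBy_factor {s t : V} {k : ℕ} {w : ArtinMonoid G} (hw : w ≠ 1)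
    (h : SemiconjBy w (of t ^ (k + 1)) (of s ^ (k + 1))) :
    ∃ c s' v, w = c * v ∧ 0 < length c ∧ SemiconjBy c (of s') (of s) := by
  obtain ⟨r, w, rfl⟩ := (eq_one_or_exists_of_mul w).resolve_left hw
  rcases eq_or_ne s r with rfl | hne
  · exact ⟨of s, s, w, rfl, by simp only [length_of, zero_lt_one], Commute.refl _⟩
  have hdvd : of r ∣ of s ^ (k + 1) * (of r * w) :=
    ⟨w * of t ^ (k + 1), by rw [← h.eq, mul_assoc]⟩
  obtain ⟨v, hv⟩ := rightCompl_dvd_of_of_dvd_pow_mul hne hdvd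
  obtain ⟨s', hs'⟩ := exists_semiconjBy_rightCompl (G := G) s r
  refine ⟨_, s', v, hv, ?_, hs'⟩
  obtain ⟨x, hx⟩ := of_dvd_rightCompl (G := G) hne
  rw [hx, length_mul, length_of]
  omega

theorem semiconjBy_of_semiconjBy_pow {s t : V} {k : ℕ} {w : ArtinMonoid G}
    (h : SemiconjBy w (of t ^ (k + 1)) (of s ^ (k + 1))) : SemiconjBy w (of t) (of s) := by
  induction hl : length w using Nat.strong_induction_on generalizing s w with
  | _ l ih =>
    rcases eq_or_ne w 1 with rfl | hw
    · obtain rfl : t = s :=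
        eq_of_pow_succ_eq_pow_succ (by simpa only [one_mul, mul_one] using h.eq)
      exact SemiconjBy.one_left _
    obtain ⟨c, s', v, rfl, hc, hcs⟩ := exists_semiconjBy_factor hw h
    have hv : SemiconjBy v (of t ^ (k + 1)) (of s' ^ (k + 1)) := by
      apply mul_left_cancel (a := c)
      rw [← mul_assoc, h.eq, ← mul_assoc, ← mul_assoc, (hcs.pow_right (k + 1)).eq]
    rw [length_mul] at hl
    exact hcs.mul_left (ih (length v) (by omega) hv rfl)

end Roots

end ArtinMonoid

namespace ArtinGroup

variable {V : Type*} {G : SimpleGraph V}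

/-- The standard generators of the Artin group. -/
def of (i : V) : ArtinGroup G := PresentedGroup.of i

theorem braid {i j : V} (h : G.Adj i j) :
    (of i * of j * of i : ArtinGroup G) = of j * of i * of j :=
  PresentedGroup.mk_eq_mk_of_mul_inv_mem ⟨i, j, .inl ⟨h, rfl⟩⟩

theorem commute_of {i j : V} (hne : i ≠ j) (h : ¬ G.Adj i j) :
    Commute (of i : ArtinGroup G) (of j) :=
  PresentedGroup.mk_eq_mk_of_mul_inv_mem ⟨i, j, .inr ⟨hne, h, rfl⟩⟩

/-- The homomorphism from the Artin group determined by elements satisfying the braid and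
commutation relations. -/
def lift {K : Type*} [Group K] (f : V → K)
    (hbraid : ∀ i j, G.Adj i j → f i * f j * f i = f j * f i * f j)
    (hcomm : ∀ i j, i ≠ j → ¬ G.Adj i j → f i * f j = f j * f i) : ArtinGroup G →* K :=
  PresentedGroup.toGroup (f := f) <| by
    rintro _ ⟨i, j, ⟨h, rfl⟩ | ⟨hne, h, rfl⟩⟩
    · simpa only [map_mul, map_inv, FreeGroup.lift_apply_of, mul_inv_eq_one] using hbraid i j h
    · simpa only [map_mul, map_inv, FreeGroup.lift_apply_of, mul_inv_eq_one] using hcomm i j hne h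

theorem lift_of {K : Type*} [Group K] (f : V → K)
    (hbraid : ∀ i j, G.Adj i j → f i * f j * f i = f j * f i * f j)
    (hcomm : ∀ i j, i ≠ j → ¬ G.Adj i j → f i * f j = f j * f i) (i : V) :
    lift f hbraid hcomm (of i) = f i :=
  PresentedGroup.toGroup.of _

theorem mem_center_iff_forall_commute_of {x : ArtinGroup G} :
    x ∈ Subgroup.center (ArtinGroup G) ↔ ∀ i, Commute (of i) x := by
  refine ⟨fun hx i ↦ Subgroup.mem_center_iff.1 hx _, fun hx ↦ Subgroup.mem_center_iff.2 fun y ↦ ?_⟩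
  exact Subgroup.mem_centralizer_singleton_iff.1 <| PresentedGroup.generated_by _
    (Subgroup.centralizer {x}) (fun i ↦ Subgroup.mem_centralizer_singleton_iff.2 (hx i)) y

end ArtinGroup

namespace ArtinMonoid

variable {V : Type*} {G : SimpleGraph V}

/-- The canonical homomorphism from the Artin monoid to the Artin group. -/
def toArtinGroup (G : SimpleGraph V) : ArtinMonoid G →* ArtinGroup G :=
  lift ArtinGroup.of (fun _ _ ↦ ArtinGroup.braid) (fun _ _ ↦ ArtinGroup.commute_of)

@[simp]
theorem toArtinGroup_of (i : V) : toArtinGroup G (of i) = ArtinGroup.of i := rfl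

theorem toArtinGroup_injective_of_isUnit {N : Type*} [Monoid N] {f : ArtinMonoid G →* N}
    (hf : Function.Injective f) (hunit : ∀ i, IsUnit (f (of i))) :
    Function.Injective (toArtinGroup G) := by
  choose u hu using hunit
  have hbraid (i j : V) (h : G.Adj i j) : u i * u j * u i = u j * u i * u j :=
    Units.ext <| by simp only [Units.val_mul, hu, ← map_mul, braid h]
  have hcomm (i j : V) (hne : i ≠ j) (h : ¬ G.Adj i j) : u i * u j = u j * u i :=
    Units.ext <| by simp only [Units.val_mul, hu, ← map_mul, (commute_of hne h).eq]
  let ψ : ArtinGroup G →* N := (Units.coeHom N).comp (ArtinGroup.lift u hbraid hcomm)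
  have hψ : ψ.comp (toArtinGroup G) = f :=
    PresentedMonoid.ext _ fun i ↦
      (congrArg Units.val (ArtinGroup.lift_of u hbraid hcomm i)).trans (hu i)
  refine Function.Injective.of_comp (f := ψ) ?_
  rwa [← MonoidHom.coe_comp, hψ]

theorem mem_center_iff_forall_commute_of {x : ArtinMonoid G} :
    x ∈ Submonoid.center (ArtinMonoid G) ↔ ∀ i, Commute (of i) x := by
  refine ⟨fun hx i ↦ Submonoid.mem_center_iff.1 hx _,
    fun hx ↦ Submonoid.mem_center_iff.2 fun y ↦ ?_⟩
  induction y using induction_of_mul with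
  | one => rw [one_mul, mul_one]
  | of_mul i y ih => exact (hx i).mul_left ih

/-- A central element divisible by every generator. It allows denominators to be cleared in the
Artin group; for Artin groups of finite type the square of Garside's element is an example. -/
structure IsCentralMultiple (d : ArtinMonoid G) : Prop where
  mem_center : d ∈ Submonoid.center (ArtinMonoid G)
  of_dvd : ∀ i, of i ∣ d

namespace IsCentralMultiple

variable {d : ArtinMonoid G}

theorem exists_commute_eq_of_mul (hd : IsCentralMultiple d) (i : V) :
    ∃ q, d = of i * q ∧ Commute (of i) q := by
  obtain ⟨q, hq⟩ := hd.of_dvd i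
  exact ⟨q, hq, commute_of_mul_mem_center (hq ▸ hd.mem_center)⟩

theorem toArtinGroup_injective (hd : IsCentralMultiple d) :
    Function.Injective (toArtinGroup G) := by
  obtain ⟨N, _, f, hf, hunit⟩ := exists_injective_hom_isUnit_of_mem_center (M := ArtinMonoid G)
  refine toArtinGroup_injective_of_isUnit hf fun i ↦ ?_
  obtain ⟨q, hq, hcomm⟩ := hd.exists_commute_eq_of_mul i
  have hfd : IsUnit (f (of i) * f q) := by
    rw [← map_mul, ← hq]
    exact hunit d hd.mem_center
  exact ((hcomm.map f).isUnit_mul_iff.1 hfd).1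

theorem toArtinGroup_mem_center (hd : IsCentralMultiple d) :
    toArtinGroup G d ∈ Subgroup.center (ArtinGroup G) :=
  ArtinGroup.mem_center_iff_forall_commute_of.2 fun i ↦
    Commute.map (mem_center_iff_forall_commute_of.1 hd.mem_center i) (toArtinGroup G)

theorem commute_toArtinGroup_pow (hd : IsCentralMultiple d) (x : ArtinGroup G) (m : ℕ) :
    Commute x (toArtinGroup G d ^ m) :=
  Commute.pow_right (Subgroup.mem_center_iff.1 hd.toArtinGroup_mem_center x) m

theorem exists_pow_mul_eq_toArtinGroup (hd : IsCentralMultiple d) (x : ArtinGroup G) :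
    ∃ m p, toArtinGroup G d ^ m * x = toArtinGroup G p := by
  have hx : x ∈ Subgroup.closure (Set.range (ArtinGroup.of (G := G))) := by
    rw [show ArtinGroup.of (G := G) = PresentedGroup.of from rfl, PresentedGroup.closure_range_of]
    exact Subgroup.mem_top x
  induction hx using Subgroup.closure_induction_left with
  | one => exact ⟨0, 1, by simp only [pow_zero, mul_one, map_one]⟩
  | mul_left _ hs y _ ih =>
    obtain ⟨i, rfl⟩ := hs
    obtain ⟨m, p, hp⟩ := ih
    refine ⟨m, of i * p, ?_⟩
    rw [← (hd.commute_toArtinGroup_pow _ m).left_comm, hp, map_mul, toArtinGroup_of]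
  | inv_mul_cancel _ hs y _ ih =>
    obtain ⟨i, rfl⟩ := hs
    obtain ⟨m, p, hp⟩ := ih
    obtain ⟨q, hq, hcomm⟩ := hd.exists_commute_eq_of_mul i
    refine ⟨m + 1, q * p, ?_⟩
    have hdq : toArtinGroup G d * (ArtinGroup.of i)⁻¹ = toArtinGroup G q := by
      rw [hq, hcomm.eq, map_mul, toArtinGroup_of, mul_inv_cancel_right]
    rw [pow_succ', mul_assoc, ← (hd.commute_toArtinGroup_pow _ m).left_comm, hp, ← mul_assoc, hdq,
      map_mul]

theorem commute_of_of_commute_pow (hd : IsCentralMultiple d) {i : V} {n : ℕ} (hn : n ≠ 0)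
    {x : ArtinGroup G} (h : Commute (ArtinGroup.of i ^ n) x) : Commute (ArtinGroup.of i) x := by
  obtain ⟨k, rfl⟩ := Nat.exists_eq_succ_of_ne_zero hn
  obtain ⟨m, p, hp⟩ := hd.exists_pow_mul_eq_toArtinGroup x
  have hpow : Commute p (of i ^ (k + 1)) := by
    apply hd.toArtinGroup_injective
    rw [map_mul, map_mul, map_pow, toArtinGroup_of, ← hp]
    exact ((hd.commute_toArtinGroup_pow _ m).mul_right h).symm.eq
  have hroot : Commute (of i) p := Commute.symm (semiconjBy_of_semiconjBy_pow hpow)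
  have hdx : Commute (ArtinGroup.of i) (toArtinGroup G d ^ m * x) := hp ▸ hroot.map (toArtinGroup G)
  simpa only [inv_mul_cancel_left] using
    (hd.commute_toArtinGroup_pow (ArtinGroup.of i) m).inv_right.mul_right hdx

end IsCentralMultiple

end ArtinMonoid

theorem cyclic_normal_subgroup_central_artinE8_general {V : Type*} {G : SimpleGraph V}
    {d : ArtinMonoid G} (hd : d.IsCentralMultiple) (H : Subgroup (ArtinGroup G)) [H.Normal]
    [IsCyclic H] : H ≤ Subgroup.center (ArtinGroup G) := by
  intro a ha
  rw [ArtinGroup.mem_center_iff_forall_commute_of]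
  intro i
  obtain ⟨n, hn, hcomm⟩ := exists_pow_commute_of_isCyclic (H := H) (ArtinGroup.of i)
  exact hd.commute_of_of_commute_pow hn (hcomm a ha)

namespace ArtinMonoid

section WordDivision

variable {V : Type*} (G : SimpleGraph V) [DecidableEq V] [DecidableRel G.Adj]

/-- Left division of the positive word `w` by the letter `s`. By Garside's lemma, `s` divides
`r * w` exactly when the right complement of `r` and `s` divides `w`. The first argument bounds
the recursion depth. -/
def divLetter : ℕ → V → List V → Option (List V)
  | n + 1, s, r :: w =>
    if s = r then some w
    else if G.Adj s r then
      (divLetter n s w).bind fun q ↦ (divLetter n r q).map fun q' ↦ r :: s :: q'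
    else (divLetter n s w).map (r :: ·)
  | _, _, _ => none

/-- Left division of the positive word `w` by the positive word `v`, letter by letter. -/
def divWord (n : ℕ) (v w : List V) : Option (List V) :=
  v.foldlM (fun w s ↦ divLetter G n s w) w

variable {G} {n : ℕ} {s : V} {v w q : List V}

theorem prod_of_divLetter_eq_some (h : divLetter G n s w = some q) :
    (w.map of).prod = (of s * (q.map of).prod : ArtinMonoid G) := by
  fun_induction divLetter G n s w generalizing q with
  | case1 => simp_all
  | case2 n s r w _ hadj ih₁ ih₂ =>
    obtain ⟨q₁, h₁, h⟩ := Option.bind_eq_some_iff.1 h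
    obtain ⟨q₂, h₂, rfl⟩ := Option.map_eq_some_iff.1 h
    simp only [List.map_cons, List.prod_cons]
    rw [ih₁ h₁, ih₂ q₁ h₂, braid_assoc hadj]
  | case3 n s r w hne hadj ih =>
    obtain ⟨q₁, h₁, rfl⟩ := Option.map_eq_some_iff.1 h
    simp only [List.map_cons, List.prod_cons]
    rw [ih h₁, (commute_of hne hadj).left_comm]
  | case4 => contradiction

theorem prod_of_divWord_eq_some (h : divWord G n v w = some q) :
    (w.map of).prod = ((v.map of).prod * (q.map of).prod : ArtinMonoid G) := by
  induction v generalizing w with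
  | nil =>
    obtain rfl : w = q := Option.some.inj h
    simp only [List.map_nil, List.prod_nil, one_mul]
  | cons s v ih =>
    obtain ⟨q₁, h₁, h⟩ := Option.bind_eq_some_iff.1 h
    rw [prod_of_divLetter_eq_some h₁, ih h, List.map_cons, List.prod_cons, mul_assoc]

theorem isCentralMultiple_of_divWord (hdvd : ∀ s, (divLetter G n s w).isSome)
    (hcomm : ∀ s, divWord G n w (s :: w) = some [s]) :
    IsCentralMultiple ((w.map of).prod : ArtinMonoid G) where
  mem_center := mem_center_iff_forall_commute_of.2 fun s ↦ by
    rw [commute_iff_eq]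
    simpa only [List.map_cons, List.map_nil, List.prod_cons, List.prod_nil, mul_one]
      using prod_of_divWord_eq_some (hcomm s)
  of_dvd s := by
    obtain ⟨q, hq⟩ := Option.isSome_iff_exists.1 (hdvd s)
    exact ⟨(q.map of).prod, prod_of_divLetter_eq_some hq⟩

end WordDivision

end ArtinMonoid

section E8

open ArtinMonoid

instance : DecidableRel E8Graph.Adj := fun i j ↦
  let edges : List (ℕ × ℕ) := [(1, 3), (3, 4), (4, 5), (5, 6), (6, 7), (7, 8), (2, 4)]
  decidable_of_iff
    (i ≠ j ∧ (((i : ℕ) + 1, (j : ℕ) + 1) ∈ edges ∨ ((j : ℕ) + 1, (i : ℕ) + 1) ∈ edges))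
    (by simp [E8Graph, edges])

/-- The word of `c ^ 15` for the Coxeter element `c` that multiplies the eight generators in order.
The Coxeter number of `E₈` is `30` and the longest element of its Weyl group is `-1`, so this is
Garside's element, and it is central. -/
def e8GarsideWord : List (Fin 8) := (List.replicate 15 (List.finRange 8)).flatten

theorem isCentralMultiple_e8GarsideWord :
    IsCentralMultiple ((e8GarsideWord.map of).prod : ArtinMonoid E8Graph) :=
  isCentralMultiple_of_divWord (n := 130) (by decide +kernel) (by decide +kernel)

end E8

/-- Every cyclic normal subgroup of the Artin group `A_{E₈}` is central. -/
theorem cyclic_normal_subgroup_central_artinE8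
    (H : Subgroup (ArtinGroup E8Graph)) (hnorm : H.Normal)
    (hcyc : ∃ a : ArtinGroup E8Graph, H = Subgroup.zpowers a) :
    H ≤ Subgroup.center (ArtinGroup E8Graph) := by
  obtain ⟨a, rfl⟩ := hcyc
  exact cyclic_normal_subgroup_central_artinE8_general isCentralMultiple_e8GarsideWord _
end

section
/- For every point p of the chamber C, the set 𝕌 is star-shaped with respect to the purely imaginary point i·p ∈ ℂⁿ; that is, for every z ∈ 𝕌 and every t ∈ [0,1], the point (1−t)·z + t·(i·p) lies in 𝕌. -/
/-- Brieskorn's set `𝕌 = {x + iy : y ∈ C_x}` associated with a family of linear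
functionals `α i` on `ℝⁿ`: the set of `z ∈ ℂⁿ` such that `α i (Im z) > 0` for
every `i` with `α i (Re z) = 0`. -/
def brieskornU {n : ℕ} {I : Type*} (α : I → ((Fin n → ℝ) →ₗ[ℝ] ℝ)) :
    Set (Fin n → ℂ) :=
  {z | ∀ i, α i (fun k => (z k).re) = 0 → 0 < α i (fun k => (z k).im)}

/-!
A complex number `w` satisfies `w.re = 0 → 0 < w.im` exactly when it avoids the closed ray from `0`
through `-i`, that is, when `-i * w` lies in the slit plane. Hence `𝕌` is the intersection of the
preimages of the slit plane under the functionals `-i * α_j`, extended complex-linearly. The slit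
plane is star-shaped about every positive real number, and `-i * α_j` sends `i·p` to `α_j p > 0`.
-/

/-- The complex-linear extension to `ℂ^ι` of a real linear functional on `ℝ^ι`, encoded by
`z ↦ f (Re z) + i f (Im z)` so that `ι` may be infinite. -/
def complexExtension {ι : Type*} (f : (ι → ℝ) →ₗ[ℝ] ℝ) : (ι → ℂ) →ₗ[ℂ] ℂ where
  toFun z := ⟨f (fun k => (z k).re), f (fun k => (z k).im)⟩
  map_add' z w := Complex.ext (map_add f _ _) (map_add f _ _)
  map_smul' c z := by
    have re_smul : (fun k => ((c • z) k).re) =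
        c.re • (fun k => (z k).re) - c.im • (fun k => (z k).im) := rfl
    have im_smul : (fun k => ((c • z) k).im) =
        c.re • (fun k => (z k).im) + c.im • (fun k => (z k).re) := rfl
    rw [re_smul, im_smul]
    apply Complex.ext <;> simp

lemma complexExtension_ofReal {ι : Type*} (f : (ι → ℝ) →ₗ[ℝ] ℝ) (p : ι → ℝ) :
    complexExtension f (fun k => (p k : ℂ)) = f p :=
  Complex.ext rfl (map_zero f)

lemma neg_I_mul_mem_slitPlane_iff {w : ℂ} :
    -Complex.I * w ∈ Complex.slitPlane ↔ (w.re = 0 → 0 < w.im) := by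
  simp [Complex.mem_slitPlane_iff, or_comm, imp_iff_not_or]

lemma brieskornU_eq_iInter_preimage_slitPlane {n : ℕ} {I : Type*}
    (α : I → ((Fin n → ℝ) →ₗ[ℝ] ℝ)) :
    brieskornU α =
      ⋂ i, (-Complex.I • complexExtension (α i)) ⁻¹' Complex.slitPlane := by
  ext z
  rw [Set.mem_iInter]
  exact forall_congr' fun i =>
    (neg_I_mul_mem_slitPlane_iff (w := complexExtension (α i) z)).symm

theorem brieskornU_starShaped_general {n : ℕ} {I : Type*}
    (α : I → ((Fin n → ℝ) →ₗ[ℝ] ℝ)) (p : Fin n → ℝ) (hp : ∀ i, 0 < α i p) :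
    StarConvex ℝ (fun k => Complex.I * (p k : ℂ)) (brieskornU α) := by
  rw [brieskornU_eq_iInter_preimage_slitPlane]
  refine starConvex_iInter fun i => ?_
  let g : (Fin n → ℂ) →ₗ[ℂ] ℂ := -Complex.I • complexExtension (α i)
  have center_image : g (fun k => Complex.I * (p k : ℂ)) = α i p := by
    calc
      g (Complex.I • fun k => (p k : ℂ))
          = Complex.I • -Complex.I • complexExtension (α i) (fun k => (p k : ℂ)) := map_smul g _ _
      _ = α i p := by rw [complexExtension_ofReal, smul_smul]; simp
  have star_image : StarConvex ℝ (g (fun k => Complex.I * (p k : ℂ))) Complex.slitPlane :=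
    center_image ▸ Complex.starConvex_ofReal_slitPlane (hp i)
  exact star_image.linear_preimage (g.restrictScalars ℝ)

/-- For every point `p` of the chamber `C = {y : ∀ i, α i y > 0}`, the set `𝕌`
is star-shaped with respect to the purely imaginary point `i·p ∈ ℂⁿ`: for every
`z ∈ 𝕌` and every `t ∈ [0,1]`, the point `(1−t)·z + t·(i·p)` lies in `𝕌`. -/
theorem brieskornU_starShaped
    {n : ℕ} (hn : 1 ≤ n) {I : Type*} [Fintype I]
    (α : I → ((Fin n → ℝ) →ₗ[ℝ] ℝ)) (hα : ∀ i, α i ≠ 0)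
    (p : Fin n → ℝ) (hp : ∀ i, 0 < α i p) :
    ∀ z ∈ brieskornU α, ∀ t ∈ Set.Icc (0 : ℝ) 1,
      ((1 - t) • z + t • (fun k => Complex.I * (p k : ℂ))) ∈ brieskornU α := by
  intro z hz t ht
  rw [add_comm]
  exact brieskornU_starShaped_general α p hp hz ht.1 (sub_nonneg.2 ht.2) (add_sub_cancel t 1)
end

section
/- The set 𝕌 (being star-like with respect to any point of i·C) is a contractible topological space. -/
/-!
Let `y ∈ C` and `z ∈ 𝕌`. At a point `a • iy + b • z` of the segment from `iy` to `z` with `0 < b`,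
the real part is `b • Re z`, on which the same `α i` vanish as on `Re z`; the imaginary part
`a • y + b • Im z` is positive under these `α i`, since `y` and `Im z` are. Hence `𝕌` is
star-shaped about `iy`.
-/

theorem starConvex_setOf_eq_zero_imp_pos {𝕜 E F G : Type*}
    [Semiring 𝕜] [IsDomain 𝕜] [PartialOrder 𝕜]
    [AddCommMonoid E] [Module 𝕜 E]
    [AddCommMonoid F] [Module 𝕜 F] [Module.IsTorsionFree 𝕜 F]
    [AddCommMonoid G] [PartialOrder G] [IsOrderedAddMonoid G] [Module 𝕜 G]
    [PosSMulStrictMono 𝕜 G]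
    (f : E →ₗ[𝕜] F) (g : E →ₗ[𝕜] G) {w : E} (hfw : f w = 0) (hgw : 0 < g w) :
    StarConvex 𝕜 w {z | f z = 0 → 0 < g z} := by
  intro z hz a b ha hb hab hf
  rcases hb.eq_or_lt with rfl | hb
  · obtain rfl : a = 1 := by simpa using hab
    simpa using hgw
  · have hfz : f z = 0 := by simpa [hfw, hb.ne'] using hf
    calc
      0 < a • g w + b • g z := lt_add_of_nonneg_of_lt (smul_nonneg ha hgw.le)
        (smul_pos hb (hz hfz))
      _ = g (a • w + b • z) := by simp only [map_add, map_smul]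

theorem brieskornU_contractible_general {E I : Type*} [AddCommGroup E] [Module ℝ E]
    [TopologicalSpace E] [ContinuousAdd E] [ContinuousSMul ℝ E] (f g : I → E →ₗ[ℝ] ℝ)
    (h : ∃ w, ∀ i, f i w = 0 ∧ 0 < g i w) :
    ContractibleSpace {z | ∀ i, f i z = 0 → 0 < g i z} := by
  obtain ⟨w, hw⟩ := h
  have hstar : StarConvex ℝ w {z | ∀ i, f i z = 0 → 0 < g i z} := by
    simpa only [Set.ofPred_forall] using
      starConvex_iInter fun i ↦ starConvex_setOf_eq_zero_imp_pos (f i) (g i) (hw i).1 (hw i).2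
  exact hstar.contractibleSpace ⟨w, fun i _ ↦ (hw i).2⟩

/-- The set `𝕌` (being star-like with respect to any point of `i·C`, where the
chamber `C = {y : ∀ i, α i y > 0}` is nonempty) is a contractible topological
space. -/
theorem brieskornU_contractible
    {n : ℕ} (hn : 1 ≤ n) {I : Type*} [Fintype I]
    (α : I → ((Fin n → ℝ) →ₗ[ℝ] ℝ)) (hα : ∀ i, α i ≠ 0)
    (hC : ∃ y : Fin n → ℝ, ∀ i, 0 < α i y) :
    ContractibleSpace (brieskornU α) := by
  obtain ⟨y, hy⟩ := hC
  exact brieskornU_contractible_general (fun i ↦ α i ∘ₗ Complex.reLm.compLeft (Fin n))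
    (fun i ↦ α i ∘ₗ Complex.imLm.compLeft (Fin n))
    ⟨fun k ↦ ⟨0, y k⟩, fun i ↦ ⟨map_zero (α i), hy i⟩⟩
end
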